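/- arXiv:2403.18138 — 3 statements merged into one kernel-verified Lean document; each statement's English description precedes it below -/
import Mathlib

section
/- Let $k$ be an algebraically closed field of characteristic $0$, $G$ a group, and $\rho, \rho'\colon G \to \mathrm{GL}_2(k)$ two representations with $\det \rho(g) = \det \rho'(g) = 1$ for all $g$, with $\rho$ irreducible. If the symmetric squares $\mathrm{Sym}^2 \rho$ and $\mathrm{Sym}^2 \rho'$ are isomorphic as representations of $G$, then there exists a character $\chi\colon G \to k^{\times}$ with $\chi^2 = 1$ such that $\rho'$ is isomorphic to $\chi \otimes \rho$. -/
/-- The second symmetric power of a `2 × 2` matrix `g`, i.e. the matrix of the induced action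
on `Sym²(k²)` in the basis `e₁², e₁e₂, e₂²` (where `g e₁ = g₀₀ e₁ + g₁₀ e₂`,
`g e₂ = g₀₁ e₁ + g₁₁ e₂`). -/
def sym2Mat {k : Type*} [CommRing k] (g : Matrix (Fin 2) (Fin 2) k) :
    Matrix (Fin 3) (Fin 3) k :=
  Matrix.of
    ![![g 0 0 ^ 2, g 0 0 * g 0 1, g 0 1 ^ 2],
      ![2 * g 0 0 * g 1 0, g 0 0 * g 1 1 + g 0 1 * g 1 0, 2 * g 0 1 * g 1 1],
      ![g 1 0 ^ 2, g 1 0 * g 1 1, g 1 1 ^ 2]]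

/-! The representation `Sym² ρ` preserves the discriminant form `b ^ 2 - 4 * a * c` up to the
factor `det ρ ^ 2`. If `P` intertwines `Sym² ρ` and `Sym² ρ'` and `A` is the composition of `P`
with its adjoint, then `A` is self-adjoint and commutes with `Sym² ρ'`. Over an algebraically
closed field with `2 ≠ 0` it has a square root `S` which is a polynomial in `A` (interpolate
square roots of the eigenvalues, then lift the congruence to the characteristic polynomial by
Newton's method), so `P * S⁻¹` is an isometry that still intertwines. An isometry of the
discriminant form sends `e₁²` and `e₂²` to squares of vectors of `k²`, and is therefore `Sym² Q`
for some `Q`. Hence `ρ'` and `Q⁻¹ ρ Q` have the same symmetric square, which forces them to differ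
by signs, and these signs form a character. -/

open Polynomial Matrix

section SquareRoot

lemma isSquare_of_isNilpotent_sq_sub {S : Type*} [CommRing S] {a b : S} (h2 : IsUnit (2 : S))
    (ha : IsUnit a) (hb : IsNilpotent (b ^ 2 - a)) : IsSquare a := by
  have hb_unit : IsUnit b := by
    have hb2 : IsUnit (a + (b ^ 2 - a)) :=
      hb.isUnit_add_left_of_commute ha (Commute.all _ _)
    rwa [add_sub_cancel, isUnit_pow_iff two_ne_zero] at hb2
  obtain ⟨r, ⟨-, hr⟩, -⟩ := existsUnique_nilpotent_sub_and_aeval_eq_zero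
    (P := X ^ 2 - C a) (x := b) (by simpa using hb)
    (by simpa [one_add_one_eq_two] using h2.mul hb_unit)
  exact ⟨r, by simpa [sub_eq_zero, sq, eq_comm] using hr⟩

variable {k : Type*} [Field k]

lemma dvd_pow_natDegree_of_forall_isRoot {f g : k[X]} (hf : f.Splits) (hf0 : f ≠ 0)
    (hg : ∀ x ∈ f.roots, g.IsRoot x) : f ∣ g ^ f.natDegree := by
  have hlead : IsUnit (C f.leadingCoeff) := (leadingCoeff_ne_zero.mpr hf0).isUnit.map C
  have hprod : (f.roots.map fun x ↦ X - C x).prod ∣ (f.roots.map fun _ ↦ g).prod :=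
    Multiset.prod_dvd_prod_of_dvd _ _ fun x hx ↦ dvd_iff_isRoot.mpr (hg x hx)
  rw [Multiset.map_const', Multiset.prod_replicate, ← hf.natDegree_eq_card_roots] at hprod
  rwa [← hlead.mul_left_dvd, ← hf.eq_prod_roots] at hprod

lemma isUnit_root_of_eval_zero_ne_zero {f : k[X]} (h0 : f.eval 0 ≠ 0) :
    IsUnit (AdjoinRoot.root f) := by
  have hX : IsCoprime X f :=
    (irreducible_X.coprime_iff_not_dvd).mpr (by rwa [X_dvd_iff, coeff_zero_eq_eval_zero])
  simpa [isCoprime_zero_right] using hX.map (AdjoinRoot.mk f)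

lemma exists_dvd_sq_sub_X [NeZero (2 : k)] {f : k[X]} (hf : f.Splits)
    (hsq : ∀ x ∈ f.roots, IsSquare x) (h0 : f.eval 0 ≠ 0) : ∃ p : k[X], f ∣ p ^ 2 - X := by
  classical
  have hf0 : f ≠ 0 := by rintro rfl; simp at h0
  choose! r hr using hsq
  let q := Lagrange.interpolate f.roots.toFinset id r
  have hq (x : k) (hx : x ∈ f.roots) : (q ^ 2 - X).IsRoot x := by
    have hqx : q.eval x = r x :=
      Lagrange.eval_interpolate_at_node r (Set.injOn_id _) (Multiset.mem_toFinset.mpr hx)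
    rw [IsRoot, eval_sub, eval_pow, eval_X, hqx, sq, ← hr x hx, sub_self]
  have hnil : IsNilpotent (AdjoinRoot.mk f q ^ 2 - AdjoinRoot.root f) := by
    refine ⟨f.natDegree, ?_⟩
    simpa using AdjoinRoot.mk_eq_zero.mpr (dvd_pow_natDegree_of_forall_isRoot hf hf0 hq)
  have h2 : IsUnit (2 : AdjoinRoot f) := by
    have := (isUnit_iff_ne_zero.mpr (two_ne_zero (α := k))).map (algebraMap k (AdjoinRoot f))
    rwa [map_ofNat] at this
  obtain ⟨y, hy⟩ := isSquare_of_isNilpotent_sq_sub h2 (isUnit_root_of_eval_zero_ne_zero h0) hnil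
  obtain ⟨p, rfl⟩ := AdjoinRoot.mk_surjective y
  refine ⟨p, AdjoinRoot.mk_eq_zero.mp ?_⟩
  rw [map_sub, map_pow, AdjoinRoot.mk_X, hy, sq, sub_self]

lemma exists_aeval_sq_eq [IsAlgClosed k] [NeZero (2 : k)] {n : Type*} [Fintype n]
    [DecidableEq n] {A : Matrix n n k} (hA : IsUnit A) : ∃ p : k[X], aeval A p ^ 2 = A := by
  have h0 : A.charpoly.eval 0 ≠ 0 := by
    have := (A.isUnit_iff_isUnit_det.mp hA).ne_zero
    simpa [eval_charpoly, det_neg] using this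
  obtain ⟨p, hp⟩ := exists_dvd_sq_sub_X (IsAlgClosed.splits A.charpoly)
    (fun x _ ↦ IsAlgClosed.exists_eq_mul_self x) h0
  refine ⟨p, ?_⟩
  have := aeval_eq_zero_of_dvd_aeval_eq_zero hp A.aeval_self_charpoly
  simpa [sub_eq_zero] using this

end SquareRoot

section Isometry

variable {k n : Type*} [Fintype n]

lemma isSelfAdjoint_of_congr [CommRing k] {J₁ J₂ P A : Matrix n n k} (hJ₁ : J₁.IsSymm)
    (hJ₂ : J₂.IsSymm) (hA : Pᵀ * J₁ * P = J₂ * A) : J₂.IsSelfAdjoint A := by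
  have hsymm : (J₂ * A)ᵀ = J₂ * A := by
    rw [← hA, transpose_mul, transpose_mul, transpose_transpose, hJ₁.eq, Matrix.mul_assoc]
  rwa [transpose_mul, hJ₂.eq] at hsymm

variable [DecidableEq n]

lemma isSelfAdjoint_aeval [CommRing k] {J A : Matrix n n k} (h : J.IsSelfAdjoint A)
    (p : k[X]) : J.IsSelfAdjoint (aeval A p) := by
  have hpow (i : ℕ) : (Aᵀ) ^ i * J = J * A ^ i := (SemiconjBy.pow_right (a := J) h.symm i).symm
  simp only [Matrix.IsSelfAdjoint, Matrix.IsAdjointPair, aeval_eq_sum_range, transpose_sum,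
    transpose_smul, transpose_pow, Finset.sum_mul, Finset.mul_sum, smul_mul_assoc,
    mul_smul_comm, hpow]

lemma transpose_mul_inv_mul_mul_inv [CommRing k] {J₁ J₂ P A : Matrix n n k} {S : GL n k}
    (hA : Pᵀ * J₁ * P = J₂ * A) (hS : J₂.IsSelfAdjoint S) (hSA : S.val ^ 2 = A) :
    (P * S⁻¹.val)ᵀ * J₁ * (P * S⁻¹.val) = J₂ :=
  calc (P * S⁻¹.val)ᵀ * J₁ * (P * S⁻¹.val)
      = S⁻¹.valᵀ * (Pᵀ * J₁ * P) * S⁻¹.val := by simp only [transpose_mul, mul_assoc]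
    _ = S⁻¹.valᵀ * (J₂ * S.val) * (S.val * S⁻¹.val) := by
        rw [hA, ← hSA, sq]; simp only [mul_assoc]
    _ = (S.val * S⁻¹.val)ᵀ * J₂ := by
        rw [← hS, transpose_mul, Units.mul_inv, mul_one, mul_assoc]
    _ = J₂ := by rw [Units.mul_inv, transpose_one, one_mul]

lemma commute_of_congr [CommRing k] {J₁ J₂ P A X Y : Matrix n n k} {μ : kˣ} (hJ₂ : IsUnit J₂)
    (hX : Xᵀ * J₁ * X = μ • J₁) (hY : Yᵀ * J₂ * Y = μ • J₂) (hXY : X * P = P * Y)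
    (hA : Pᵀ * J₁ * P = J₂ * A) : Commute Y A := by
  have hYJ : IsUnit (Yᵀ * J₂) := isUnit_of_mul_isUnit_left (hY ▸ hJ₂.smul μ)
  refine hYJ.mul_left_cancel ?_
  calc Yᵀ * J₂ * (Y * A) = μ • (J₂ * A) := by rw [← mul_assoc, hY, smul_mul_assoc]
    _ = Pᵀ * (Xᵀ * J₁ * X) * P := by rw [hX, ← hA]; simp only [mul_smul_comm, smul_mul_assoc]
    _ = (X * P)ᵀ * J₁ * (X * P) := by simp only [transpose_mul, mul_assoc]
    _ = Yᵀ * (Pᵀ * J₁ * P) * Y := by rw [hXY]; simp only [transpose_mul, mul_assoc]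
    _ = Yᵀ * J₂ * (A * Y) := by rw [hA]; simp only [mul_assoc]

lemma exists_isometry_intertwining [Field k] [IsAlgClosed k] [NeZero (2 : k)] {ι : Type*}
    {J₁ J₂ P : Matrix n n k} {X Y : ι → Matrix n n k} {μ : ι → kˣ}
    (hJ₁ : IsUnit J₁) (hJ₂ : IsUnit J₂) (hJ₁_symm : J₁.IsSymm) (hJ₂_symm : J₂.IsSymm)
    (hX : ∀ i, (X i)ᵀ * J₁ * X i = μ i • J₁) (hY : ∀ i, (Y i)ᵀ * J₂ * Y i = μ i • J₂)
    (hP : IsUnit P) (hXY : ∀ i, X i * P = P * Y i) :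
    ∃ P' : Matrix n n k, P'ᵀ * J₁ * P' = J₂ ∧ ∀ i, X i * P' = P' * Y i := by
  obtain ⟨A, hA⟩ : ∃ A, Pᵀ * J₁ * P = J₂ * A :=
    ⟨J₂⁻¹ * (Pᵀ * J₁ * P),
      (mul_nonsing_inv_cancel_left _ _ (J₂.isUnit_iff_isUnit_det.mp hJ₂)).symm⟩
  have hA_unit : IsUnit A :=
    isUnit_of_mul_isUnit_right (hA ▸ ((P.isUnit_transpose.mpr hP).mul hJ₁).mul hP)
  obtain ⟨p, hp⟩ := exists_aeval_sq_eq hA_unit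
  obtain ⟨S, hS⟩ : IsUnit (aeval A p) := (isUnit_pow_iff two_ne_zero).mp (hp.symm ▸ hA_unit)
  have hS_adj : J₂.IsSelfAdjoint S :=
    hS ▸ isSelfAdjoint_aeval (isSelfAdjoint_of_congr hJ₁_symm hJ₂_symm hA) p
  have hS_comm (i : ι) : Commute (Y i) S :=
    hS ▸ Algebra.commute_of_mem_adjoin_singleton_of_commute (aeval_mem_adjoin_singleton k A)
      (commute_of_congr hJ₂ (hX i) (hY i) (hXY i) hA)
  refine ⟨P * S⁻¹.val, transpose_mul_inv_mul_mul_inv hA hS_adj (hS ▸ hp), fun i ↦ ?_⟩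
  rw [← mul_assoc, hXY, mul_assoc, (hS_comm i).units_inv_right.eq, mul_assoc]

end Isometry

section SymSquare

variable {k : Type*} [CommRing k]

lemma sym2Mat_mul (g h : Matrix (Fin 2) (Fin 2) k) :
    sym2Mat (g * h) = sym2Mat g * sym2Mat h := by
  ext i j
  fin_cases i <;> fin_cases j <;>
    simp [sym2Mat, Matrix.mul_apply, Fin.sum_univ_succ] <;> ring

lemma sym2Mat_one : sym2Mat (1 : Matrix (Fin 2) (Fin 2) k) = 1 := by
  ext i j
  fin_cases i <;> fin_cases j <;> simp [sym2Mat]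

lemma exists_eq_smul_one_of_sym2Mat_eq_one [IsReduced k] {g : Matrix (Fin 2) (Fin 2) k}
    (h : sym2Mat g = 1) : ∃ c : kˣ, c * c = 1 ∧ g = (c : k) • 1 := by
  have h00 : g 0 0 ^ 2 = 1 := congr_fun₂ h 0 0
  have h01 : g 0 1 = 0 := eq_zero_of_pow_eq_zero (congr_fun₂ h 0 2)
  have h10 : g 1 0 = 0 := eq_zero_of_pow_eq_zero (congr_fun₂ h 2 0)
  have h11 : g 0 0 * g 1 1 + g 0 1 * g 1 0 = 1 := congr_fun₂ h 1 1
  have hdiag : g 1 1 = g 0 0 := by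
    linear_combination g 0 0 * h11 - g 1 1 * h00 - g 0 0 * g 1 0 * h01
  have hc : g 0 0 * g 0 0 = 1 := by rw [← sq, h00]
  refine ⟨⟨g 0 0, g 0 0, hc, hc⟩, Units.ext hc, ?_⟩
  ext i j
  fin_cases i <;> fin_cases j <;> simp [h01, h10, hdiag]

lemma exists_eq_smul_of_sym2Mat_eq [IsReduced k] {g h : GL (Fin 2) k}
    (hgh : sym2Mat g.val = sym2Mat h.val) :
    ∃ c : kˣ, c * c = 1 ∧ g.val = (c : k) • h.val := by
  have hone : sym2Mat (g * h⁻¹).val = 1 := by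
    rw [Units.val_mul, sym2Mat_mul, hgh, ← sym2Mat_mul, Units.mul_inv, sym2Mat_one]
  obtain ⟨c, hc, hc'⟩ := exists_eq_smul_one_of_sym2Mat_eq_one hone
  refine ⟨c, hc, ?_⟩
  calc g.val
      = (g * h⁻¹).val * h.val := by rw [← Units.val_mul, inv_mul_cancel_right]
    _ = (c : k) • h.val := by rw [hc', smul_mul_assoc, one_mul]

variable (k)

/-- The Gram matrix of the discriminant form `b ^ 2 - 4 * a * c` on the vectors
`a e₁² + b e₁e₂ + c e₂²`, the form preserved by symmetric squares up to `det ^ 2`. -/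
def discForm : Matrix (Fin 3) (Fin 3) k :=
  !![0, 0, -2; 0, 1, 0; -2, 0, 0]

lemma isSymm_discForm : (discForm k).IsSymm := by
  ext i j
  fin_cases i <;> fin_cases j <;> rfl

lemma isUnit_discForm (h2 : IsUnit (2 : k)) : IsUnit (discForm k) := by
  rw [isUnit_iff_isUnit_det]
  simpa [discForm, det_fin_three] using h2

variable {k}

lemma sym2Mat_transpose_mul_discForm_mul (g : Matrix (Fin 2) (Fin 2) k) :
    (sym2Mat g)ᵀ * discForm k * sym2Mat g = g.det ^ 2 • discForm k := by
  ext i j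
  fin_cases i <;> fin_cases j <;>
    simp [sym2Mat, discForm, mul_apply, Fin.sum_univ_succ, det_fin_two] <;> ring

lemma transpose_mul_discForm_mul_apply (P : Matrix (Fin 3) (Fin 3) k) (i j : Fin 3) :
    (Pᵀ * discForm k * P) i j = P 1 i * P 1 j - 2 * (P 0 i * P 2 j + P 2 i * P 0 j) := by
  simp only [discForm, mul_apply, transpose_apply, of_apply, cons_val', cons_val_fin_one,
    Fin.sum_univ_three, Fin.isValue, cons_val_zero, cons_val_one, cons_val, mul_zero, add_zero,
    mul_neg, zero_add, neg_mul, mul_one]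
  ring

lemma exists_sq_of_discrim_eq_zero [NoZeroDivisors k] {a b c : k}
    (ha : IsSquare a) (hc : IsSquare c) (h : discrim a b c = 0) :
    ∃ p q : k, p ^ 2 = a ∧ 2 * p * q = b ∧ q ^ 2 = c := by
  obtain ⟨p, rfl⟩ := ha
  obtain ⟨q, rfl⟩ := hc
  have hsq : b ^ 2 = (2 * p * q) ^ 2 := by rw [discrim] at h; linear_combination h
  rcases sq_eq_sq_iff_eq_or_eq_neg.mp hsq with rfl | rfl
  · exact ⟨p, q, by ring, by ring, by ring⟩
  · exact ⟨p, -q, by ring, by ring, by ring⟩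

lemma det_sq_eq_one_of_isometry {g : Matrix (Fin 2) (Fin 2) k}
    (hg : (sym2Mat g)ᵀ * discForm k * sym2Mat g = discForm k) : g.det ^ 2 = 1 := by
  rw [sym2Mat_transpose_mul_discForm_mul] at hg
  simpa [discForm] using congr_fun₂ hg 1 1

lemma exists_sym2Mat_eq_of_col_eq_one [NoZeroDivisors k] [NeZero (2 : k)]
    {R : Matrix (Fin 3) (Fin 3) k} (hR : Rᵀ * discForm k * R = discForm k)
    (h0 : R.col 0 = col (1 : Matrix (Fin 3) (Fin 3) k) 0)
    (h2 : R.col 2 = col (1 : Matrix (Fin 3) (Fin 3) k) 2) :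
    ∃ g : Matrix (Fin 2) (Fin 2) k, sym2Mat g = R := by
  have entry i j := (transpose_mul_discForm_mul_apply R i j).symm.trans (congr_fun₂ hR i j)
  have h00 : R 0 0 = 1 := congr_fun h0 0
  have h10 : R 1 0 = 0 := congr_fun h0 1
  have h20 : R 2 0 = 0 := congr_fun h0 2
  have h02 : R 0 2 = 0 := congr_fun h2 0
  have h12 : R 1 2 = 0 := congr_fun h2 1
  have h22 : R 2 2 = 1 := congr_fun h2 2
  have h21 : R 2 1 = 0 := by simpa [discForm, h00, h10, h20, two_ne_zero] using entry 0 1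
  have h01 : R 0 1 = 0 := by simpa [discForm, h02, h12, h22, two_ne_zero] using entry 2 1
  have h11 : R 1 1 ^ 2 = 1 := by simpa [discForm, h01, h21, sq] using entry 1 1
  refine ⟨!![1, 0; 0, R 1 1], ?_⟩
  ext i j
  fin_cases i <;> fin_cases j <;>
    simp [sym2Mat, h00, h10, h20, h01, h11, h21, h02, h12, h22]

lemma exists_sym2Mat_col_eq [NoZeroDivisors k] [NeZero (2 : k)] (hsq : ∀ x : k, IsSquare x)
    {P : Matrix (Fin 3) (Fin 3) k} (hP : Pᵀ * discForm k * P = discForm k) :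
    ∃ g : GL (Fin 2) k, g.val.det ^ 2 = 1 ∧
      (sym2Mat g.val).col 0 = P.col 0 ∧ (sym2Mat g.val).col 2 = P.col 2 := by
  have entry i j := (transpose_mul_discForm_mul_apply P i j).symm.trans (congr_fun₂ hP i j)
  have hcol (j : Fin 3) (hj : discForm k j j = 0) :
      ∃ p q : k, p ^ 2 = P 0 j ∧ 2 * p * q = P 1 j ∧ q ^ 2 = P 2 j :=
    exists_sq_of_discrim_eq_zero (hsq _) (hsq _) (by rw [discrim, ← hj, ← entry]; ring)
  obtain ⟨p, q, h00, h10, h20⟩ := hcol 0 rfl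
  obtain ⟨s, t, h02, h12, h22⟩ := hcol 2 rfl
  have hdet : det !![p, s; q, t] ^ 2 = 1 := by
    have h : P 1 0 * P 1 2 - 2 * (P 0 0 * P 2 2 + P 2 0 * P 0 2) = -2 := entry 0 2
    rw [← h00, ← h10, ← h20, ← h02, ← h12, ← h22] at h
    refine mul_left_cancel₀ (two_ne_zero (α := k)) ?_
    rw [det_fin_two_of]
    linear_combination -h
  have hunit : IsUnit !![p, s; q, t] :=
    (isUnit_iff_isUnit_det _).mpr (.of_pow_eq_one hdet two_ne_zero)
  refine ⟨hunit.unit, hdet, ?_, ?_⟩ <;> ext i <;> fin_cases i <;> simp [sym2Mat, *]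

lemma exists_sym2Mat_eq_of_isometry [NoZeroDivisors k] [NeZero (2 : k)]
    (hsq : ∀ x : k, IsSquare x) {P : Matrix (Fin 3) (Fin 3) k}
    (hP : Pᵀ * discForm k * P = discForm k) : ∃ g : GL (Fin 2) k, sym2Mat g.val = P := by
  obtain ⟨g, hdet, hcol⟩ := exists_sym2Mat_col_eq hsq hP
  let R := sym2Mat g⁻¹.val * P
  have hgR : sym2Mat g.val * R = P := by
    rw [← mul_assoc, ← sym2Mat_mul, Units.mul_inv, sym2Mat_one, one_mul]
  have hR : Rᵀ * discForm k * R = discForm k := by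
    calc Rᵀ * discForm k * R = Rᵀ * ((sym2Mat g.val)ᵀ * discForm k * sym2Mat g.val) * R := by
          rw [sym2Mat_transpose_mul_discForm_mul, hdet, one_smul]
      _ = (sym2Mat g.val * R)ᵀ * discForm k * (sym2Mat g.val * R) := by
          simp only [transpose_mul, mul_assoc]
      _ = discForm k := by rw [hgR, hP]
  have hR_col {j : Fin 3} (hj : (sym2Mat g.val).col j = P.col j) :
      R.col j = col (1 : Matrix (Fin 3) (Fin 3) k) j := by
    calc R.col j = sym2Mat g⁻¹.val *ᵥ P.col j := rfl
      _ = (sym2Mat g⁻¹.val * sym2Mat g.val).col j := by rw [← hj]; rfl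
      _ = col 1 j := by rw [← sym2Mat_mul, Units.inv_mul, sym2Mat_one]
  obtain ⟨h, hh⟩ := exists_sym2Mat_eq_of_col_eq_one hR (hR_col hcol.1) (hR_col hcol.2)
  have hgh : sym2Mat (g.val * h) = P := by rw [sym2Mat_mul, hh, hgR]
  have hunit : IsUnit (g.val * h) := (isUnit_iff_isUnit_det _).mpr <|
    .of_pow_eq_one (det_sq_eq_one_of_isometry (hgh ▸ hP)) two_ne_zero
  exact ⟨hunit.unit, hgh⟩

end SymSquare

lemma map_mul_of_forall_eq_smul {k A G : Type*} [CommRing k] [Ring A] [Algebra k A]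
    [FaithfulSMul k A] [Monoid G] {ρ ρ' : G →* Aˣ} {c : G → kˣ}
    (h : ∀ g, (ρ' g : A) = (c g : k) • (ρ g : A)) (g₁ g₂ : G) : c (g₁ * g₂) = c g₁ * c g₂ := by
  have hsmul : (c (g₁ * g₂) : k) • (ρ (g₁ * g₂) : A) = (c g₁ * c g₂ : k) • (ρ (g₁ * g₂) : A) := by
    rw [← h, map_mul, map_mul, Units.val_mul, Units.val_mul, h, h, smul_mul_smul_comm]
  have hone := congrArg (· * (↑(ρ (g₁ * g₂))⁻¹ : A)) hsmul
  simp only [smul_mul_assoc, Units.mul_inv, ← Algebra.algebraMap_eq_smul_one] at hone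
  exact Units.ext (FaithfulSMul.algebraMap_injective k A hone)

theorem stmt_6_general {k G : Type*} [Field k] [IsAlgClosed k] [NeZero (2 : k)] [Monoid G]
    (ρ ρ' : G →* GL (Fin 2) k) (hdet : ∀ g, (ρ g).det = (ρ' g).det)
    (hiso : ∃ P : Matrix (Fin 3) (Fin 3) k, IsUnit P ∧
      ∀ g, sym2Mat (ρ g).val * P = P * sym2Mat (ρ' g).val) :
    ∃ χ : G →* kˣ, (∀ g, χ g * χ g = 1) ∧ ∃ Q : Matrix (Fin 2) (Fin 2) k, IsUnit Q ∧
        ∀ g, (ρ' g).val * Q = Q * ((χ g : k) • (ρ g).val) := by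
  obtain ⟨P, hP, hPρ⟩ := hiso
  have h2 : IsUnit (2 : k) := (two_ne_zero (α := k)).isUnit
  obtain ⟨P', hP', hP'ρ⟩ := exists_isometry_intertwining (μ := fun g ↦ (ρ g).det ^ 2)
    (isUnit_discForm k h2) (isUnit_discForm k h2) (isSymm_discForm k) (isSymm_discForm k)
    (fun g ↦ sym2Mat_transpose_mul_discForm_mul (ρ g).val)
    (fun g ↦ hdet g ▸ sym2Mat_transpose_mul_discForm_mul (ρ' g).val) hP hPρ
  obtain ⟨Q, rfl⟩ := exists_sym2Mat_eq_of_isometry IsAlgClosed.exists_eq_mul_self hP'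
  let σ : G →* GL (Fin 2) k := (MulAut.conj Q⁻¹).toMonoidHom.comp ρ
  have hσ (g : G) : sym2Mat (ρ' g).val = sym2Mat (σ g).val := by
    calc sym2Mat (ρ' g).val
        = sym2Mat Q⁻¹.val * (sym2Mat Q.val * sym2Mat (ρ' g).val) := by
          rw [← mul_assoc, ← sym2Mat_mul, Units.inv_mul, sym2Mat_one, one_mul]
      _ = sym2Mat (σ g).val := by
          rw [← hP'ρ, ← sym2Mat_mul, ← sym2Mat_mul, ← mul_assoc]; simp [σ]
  choose c hc_sq hc using fun g ↦ exists_eq_smul_of_sym2Mat_eq (hσ g)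
  refine ⟨.mk' c (map_mul_of_forall_eq_smul hc), hc_sq, Q⁻¹.val, Q⁻¹.isUnit, fun g ↦ ?_⟩
  simp [hc, σ, mul_assoc]

/-- If `ρ, ρ' : G → GL₂(k)` have trivial determinant, `ρ` is irreducible, and
`Sym² ρ ≅ Sym² ρ'`, then `ρ' ≅ χ ⊗ ρ` for some character `χ` with `χ² = 1`. -/
theorem stmt_6 {k G : Type*} [Field k] [IsAlgClosed k] [CharZero k] [Group G]
    (ρ ρ' : G →* Matrix.GeneralLinearGroup (Fin 2) k)
    (hdet : ∀ g : G, (ρ g : Matrix (Fin 2) (Fin 2) k).det = 1)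
    (hdet' : ∀ g : G, (ρ' g : Matrix (Fin 2) (Fin 2) k).det = 1)
    (hirr : ∀ W : Submodule k (Fin 2 → k),
      (∀ g : G, ∀ v ∈ W, (ρ g : Matrix (Fin 2) (Fin 2) k).mulVec v ∈ W) → W = ⊥ ∨ W = ⊤)
    (hiso : ∃ P : Matrix (Fin 3) (Fin 3) k, IsUnit P ∧
      ∀ g : G, sym2Mat (ρ g : Matrix (Fin 2) (Fin 2) k) * P
        = P * sym2Mat (ρ' g : Matrix (Fin 2) (Fin 2) k)) :
    ∃ χ : G →* kˣ, (∀ g : G, χ g * χ g = 1) ∧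
      ∃ Q : Matrix (Fin 2) (Fin 2) k, IsUnit Q ∧
        ∀ g : G, (ρ' g : Matrix (Fin 2) (Fin 2) k) * Q
          = Q * ((χ g : k) • (ρ g : Matrix (Fin 2) (Fin 2) k)) :=
  stmt_6_general ρ ρ' (fun g ↦ Units.ext ((hdet g).trans (hdet' g).symm)) hiso
end

section
/- Let $V$ be an $r$-dimensional vector space over a field $k$, let $N\colon V \to V$ be nilpotent with $N^{r-1} \neq 0$, let $\Phi\colon V \to V$ be an invertible linear map, and let $q \in k$ satisfy $N \circ \Phi = q \cdot (\Phi \circ N)$. Suppose there is a nonzero vector $v \in \ker N$ with $\Phi v = \zeta v$ for some $\zeta \in k$. Then $\det \Phi = \zeta^r \, q^{r(r-1)/2}$. -/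
/-!
The subspaces `ker (N ^ i)`, `0 ≤ i ≤ r`, strictly increase because `N` is nilpotent and
`N ^ (r - 1) ≠ 0`, so they form a complete flag; in particular `ker N` is the line through `v`, on
which `Φ` acts by `ζ`. If `x ∈ ker (N ^ (i + 1))` then `(N ^ i) x ∈ ker N`, whence
`(N ^ i) (Φ x) = q ^ i • Φ ((N ^ i) x) = (N ^ i) ((ζ * q ^ i) • x)`. Thus `Φ` acts on the line
`ker (N ^ (i + 1)) / ker (N ^ i)` by `ζ * q ^ i`, and its determinant is the product of these
scalars.
-/

open Module

section StrictFlag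

variable {K V : Type*} [DivisionRing K] [AddCommGroup V] [Module K V] {n : ℕ}

theorem linearIndependent_of_mem_succ_of_notMem_castSucc {W : Fin (n + 1) → Submodule K V}
    (hW : Monotone W) {b : Fin n → V} (hmem : ∀ i, b i ∈ W i.succ)
    (hnotMem : ∀ i, b i ∉ W i.castSucc) : LinearIndependent K b := by
  induction n with
  | zero => exact linearIndependent_empty_type
  | succ n ih =>
    rw [← Fin.snoc_init_self b, linearIndependent_finSnoc]
    refine ⟨ih (W := Fin.init W) (hW.comp Fin.strictMono_castSucc.monotone)
      (fun i ↦ hmem i.castSucc) (fun i ↦ hnotMem i.castSucc), fun hspan ↦ ?_⟩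
    have hspan_le : Submodule.span K (Set.range (Fin.init b)) ≤ W (Fin.last n).castSucc := by
      rw [Submodule.span_le, Set.range_subset_iff]
      exact fun i ↦ hW (Fin.castSucc_le_castSucc_iff.mpr (Fin.le_last i.succ)) (hmem i.castSucc)
    exact hnotMem (Fin.last n) (hspan_le hspan)

theorem finrank_eq_val_of_strictMono [FiniteDimensional K V] (hn : finrank K V = n)
    {W : Fin (n + 1) → Submodule K V} (hW : StrictMono W) (i : Fin (n + 1)) :
    finrank K (W i) = i := by
  let d : Fin (n + 1) → Fin (n + 1) :=
    fun j ↦ ⟨finrank K (W j), Nat.lt_succ_of_le (hn ▸ (W j).finrank_le)⟩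
  have hd : StrictMono d := fun _ _ hij ↦ Submodule.finrank_lt_finrank_of_lt (hW hij)
  exact congrArg Fin.val (congrFun (hd.le_id.antisymm hd.id_le) i)

theorem exists_basis_flag_eq [FiniteDimensional K V] (hn : finrank K V = n)
    {W : Fin (n + 1) → Submodule K V} (hW : StrictMono W) :
    ∃ b : Basis (Fin n) K V, b.flag = W := by
  choose w hmem hnotMem using fun i : Fin n ↦ SetLike.exists_of_lt (hW i.castSucc_lt_succ)
  have hli := linearIndependent_of_mem_succ_of_notMem_castSucc hW.monotone hmem hnotMem
  let b := Basis.mk hli (hli.span_eq_top_of_card_eq_finrank' (by simp [hn])).ge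
  have hflag_le (i : Fin (n + 1)) : b.flag i ≤ W i := by
    refine b.flag_le_iff.mpr fun j hj ↦ ?_
    rw [Basis.mk_apply]
    exact hW.monotone (Fin.castSucc_lt_iff_succ_le.mp hj) (hmem j)
  refine ⟨b, funext fun i ↦ Submodule.eq_of_le_of_finrank_eq (hflag_le i) ?_⟩
  rw [finrank_eq_val_of_strictMono hn b.flag_strictMono, finrank_eq_val_of_strictMono hn hW]

end StrictFlag

section Determinant

variable {n : ℕ}

theorem det_eq_prod_of_sub_smul_mem_flag {R M : Type*} [CommRing R] [AddCommGroup M] [Module R M]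
    (b : Basis (Fin n) R M) {f : M →ₗ[R] M} {c : Fin n → R}
    (hf : ∀ i, f (b i) - c i • b i ∈ b.flag i.castSucc) : LinearMap.det f = ∏ i, c i := by
  have hentry {i j : Fin n} (hji : j ≤ i) :
      LinearMap.toMatrix b b f i j = c j * b.repr (b j) i := by
    have hcoord : b.coord i (f (b j) - c j • b j) = 0 :=
      b.flag_le_ker_coord (Fin.castSucc_le_castSucc_iff.mpr hji) (hf j)
    rw [map_sub, map_smul, sub_eq_zero] at hcoord
    rw [LinearMap.toMatrix_apply]
    exact hcoord
  have hupper : (LinearMap.toMatrix b b f).IsUpperTriangular := fun i j (hji : j < i) ↦ by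
    rw [hentry hji.le, b.repr_self, Finsupp.single_eq_of_ne hji.ne', mul_zero]
  rw [← LinearMap.det_toMatrix b, Matrix.det_of_isUpperTriangular hupper]
  exact Finset.prod_congr rfl fun i _ ↦ by
    rw [hentry le_rfl, b.repr_self, Finsupp.single_eq_same, mul_one]

theorem det_eq_prod_of_strictMono {K V : Type*} [Field K] [AddCommGroup V] [Module K V]
    [FiniteDimensional K V] (hn : finrank K V = n) {W : Fin (n + 1) → Submodule K V}
    (hW : StrictMono W) {f : V →ₗ[K] V} {c : Fin n → K}
    (hf : ∀ i, ∀ x ∈ W i.succ, f x - c i • x ∈ W i.castSucc) : LinearMap.det f = ∏ i, c i := by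
  obtain ⟨b, rfl⟩ := exists_basis_flag_eq hn hW
  exact det_eq_prod_of_sub_smul_mem_flag b fun i ↦
    hf i (b i) (b.self_mem_flag i.castSucc_lt_succ)

end Determinant

section KernelFlag

variable {R M : Type*} [Semiring R] [AddCommMonoid M] [Module R M] {N : M →ₗ[R] M}

theorem ker_pow_lt_ker_pow_succ (hnil : IsNilpotent N) {m : ℕ} (hm : N ^ m ≠ 0) :
    LinearMap.ker (N ^ m) < LinearMap.ker (N ^ (m + 1)) := by
  have : Nontrivial (M →ₗ[R] M) := ⟨N ^ m, 0, hm⟩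
  let l := nilpotencyClass N - 1
  have hl : l + 1 = nilpotencyClass N := Nat.sub_add_cancel (pos_nilpotencyClass_iff.mpr hnil)
  have hml : m ≤ l := by
    by_contra! hlm
    exact hm (pow_eq_zero_of_le (hl ▸ hlm) (pow_nilpotencyClass hnil))
  obtain ⟨x, hx⟩ : ∃ x, (N ^ l) x ≠ 0 := DFunLike.ne_iff.mp (pow_pred_nilpotencyClass hnil)
  refine SetLike.lt_iff_le_and_exists.mpr
    ⟨pow_succ' N m ▸ LinearMap.ker_le_ker_comp (N ^ m) N, (N ^ (l - m)) x, ?_, ?_⟩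
  · rw [LinearMap.mem_ker, ← Module.End.mul_apply, ← pow_add,
      show m + 1 + (l - m) = nilpotencyClass N by omega, pow_nilpotencyClass hnil,
      LinearMap.zero_apply]
  · rwa [LinearMap.mem_ker, ← Module.End.mul_apply, ← pow_add, Nat.add_sub_of_le hml]

theorem strictMono_ker_pow (hnil : IsNilpotent N) {r : ℕ} (hmax : N ^ (r - 1) ≠ 0) :
    StrictMono fun i : Fin (r + 1) ↦ LinearMap.ker (N ^ (i : ℕ)) :=
  Fin.strictMono_iff_lt_succ.mpr fun i ↦
    ker_pow_lt_ker_pow_succ hnil fun hi ↦ hmax (pow_eq_zero_of_le (Nat.le_sub_one_of_lt i.is_lt) hi)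

end KernelFlag

theorem finrank_ker_eq_one {K V : Type*} [DivisionRing K] [AddCommGroup V] [Module K V]
    [FiniteDimensional K V] {N : V →ₗ[K] V} (hnil : IsNilpotent N)
    (hmax : N ^ (finrank K V - 1) ≠ 0) : finrank K (LinearMap.ker N) = 1 := by
  obtain ⟨x, hx⟩ := DFunLike.ne_iff.mp hmax
  have : Nontrivial V := ⟨_, _, hx⟩
  have hone : 1 < finrank K V + 1 := Nat.lt_add_of_pos_left finrank_pos
  rw [← pow_one N]
  exact finrank_eq_val_of_strictMono rfl (strictMono_ker_pow hnil hmax) ⟨1, hone⟩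

theorem pow_apply_of_comp_eq_smul_comp {R M : Type*} [CommSemiring R] [AddCommMonoid M] [Module R M]
    {N Φ : M →ₗ[R] M} {q : R} (h : N ∘ₗ Φ = q • (Φ ∘ₗ N)) (i : ℕ) (x : M) :
    (N ^ i) (Φ x) = q ^ i • Φ ((N ^ i) x) := by
  induction i with
  | zero => simp
  | succ i ih =>
    have hN (y : M) : N (Φ y) = q • Φ (N y) := LinearMap.congr_fun h y
    simp only [pow_succ' N, Module.End.mul_apply, ih, map_smul, hN, smul_smul, pow_succ q]

theorem sub_smul_mem_ker_pow_of_mem_ker_pow_succ {R M : Type*} [CommRing R] [AddCommGroup M]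
    [Module R M] {N Φ : M →ₗ[R] M} {q ζ : R} (h : N ∘ₗ Φ = q • (Φ ∘ₗ N))
    (hker : ∀ y ∈ LinearMap.ker N, Φ y = ζ • y) {i : ℕ} {x : M}
    (hx : x ∈ LinearMap.ker (N ^ (i + 1))) : Φ x - (ζ * q ^ i) • x ∈ LinearMap.ker (N ^ i) := by
  have hNx : (N ^ i) x ∈ LinearMap.ker N := by
    rwa [LinearMap.mem_ker, ← Module.End.mul_apply, ← pow_succ']
  rw [LinearMap.mem_ker, map_sub, pow_apply_of_comp_eq_smul_comp h, hker _ hNx, map_smul,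
    smul_smul, mul_comm, sub_self]

theorem prod_fin_mul_pow {R : Type*} [CommMonoid R] (a q : R) (r : ℕ) :
    ∏ i : Fin r, a * q ^ (i : ℕ) = a ^ r * q ^ (r * (r - 1) / 2) := by
  rw [Fin.prod_univ_eq_prod_range (fun i ↦ a * q ^ i), Finset.prod_mul_distrib, Finset.prod_const,
    Finset.card_range, Finset.prod_pow_eq_pow_sum, Finset.sum_range_id]

theorem stmt_9_general {k V : Type*} [Field k] [AddCommGroup V] [Module k V]
    [FiniteDimensional k V] {r : ℕ} (hdim : finrank k V = r)
    (N Φ : V →ₗ[k] V) (hnil : IsNilpotent N) (hmax : N ^ (r - 1) ≠ 0)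
    (q : k) (h : N ∘ₗ Φ = q • (Φ ∘ₗ N))
    (v : V) (hv0 : v ≠ 0) (hvker : v ∈ LinearMap.ker N) (ζ : k) (hζ : Φ v = ζ • v) :
    LinearMap.det Φ = ζ ^ r * q ^ (r * (r - 1) / 2) := by
  have hspan : LinearMap.ker N = Submodule.span k {v} :=
    eq_span_singleton_of_mem_of_finrank_eq_one (finrank_ker_eq_one hnil (hdim ▸ hmax)) hvker hv0
  have hker : ∀ y ∈ LinearMap.ker N, Φ y = ζ • y := by
    intro y hy
    obtain ⟨a, rfl⟩ := Submodule.mem_span_singleton.mp (hspan ▸ hy)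
    rw [map_smul, hζ, smul_comm]
  calc
    LinearMap.det Φ = ∏ i : Fin r, ζ * q ^ (i : ℕ) :=
      det_eq_prod_of_strictMono hdim (strictMono_ker_pow hnil hmax) fun _ _ hx ↦
        sub_smul_mem_ker_pow_of_mem_ker_pow_succ h hker hx
    _ = ζ ^ r * q ^ (r * (r - 1) / 2) := prod_fin_mul_pow ζ q r

/-- If `N` is a maximal Jordan block nilpotent on an `r`-dimensional space, `Φ` is invertible
with `N ∘ Φ = q • (Φ ∘ N)`, and `Φ` acts on the line `ker N` by the scalar `ζ`, then
`det Φ = ζ ^ r * q ^ (r (r - 1) / 2)`. -/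
theorem stmt_9 {k V : Type*} [Field k] [AddCommGroup V] [Module k V]
    [FiniteDimensional k V] {r : ℕ} (hdim : Module.finrank k V = r)
    (N Φ : V →ₗ[k] V) (hnil : IsNilpotent N) (hmax : N ^ (r - 1) ≠ 0)
    (hΦ : Function.Bijective Φ) (q : k) (h : N ∘ₗ Φ = q • (Φ ∘ₗ N))
    (v : V) (hv0 : v ≠ 0) (hvker : v ∈ LinearMap.ker N) (ζ : k) (hζ : Φ v = ζ • v) :
    LinearMap.det Φ = ζ ^ r * q ^ (r * (r - 1) / 2) :=
  stmt_9_general hdim N Φ hnil hmax q h v hv0 hvker ζ hζ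
end

section
/- Let $V$ be an $r$-dimensional vector space over a field $k$, let $N\colon V \to V$ be nilpotent with $N^{r-1} \neq 0$, let $\Phi\colon V \to V$ be an invertible linear map, and let $q \in k$ satisfy $N \circ \Phi = q \cdot (\Phi \circ N)$. Suppose there is a nonzero vector $v \in \ker N$ with $\Phi v = \zeta v$ for some $\zeta \in k$. Then the characteristic polynomial of $\Phi$ equals $\prod_{j=0}^{r-1} (X - q^j \zeta)$. -/
/-!
A maximal Jordan block has a basis `b 0, ..., b n` with `N (b 0) = 0` and `N (b (i + 1)) = b i`, so
that the `i`-th coordinate of a vector is the `0`-th coordinate of its image under `N ^ i`.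
Since `N ^ i Φ = q ^ i Φ N ^ i`, the `(i, j)` entry of the matrix of `Φ` is `q ^ i` times the `0`-th
coordinate of `Φ (N ^ i (b j))`. This vanishes for `j < i`, and for `i = j` it is `q ^ i ζ`, because
`N ^ i (b i) = b 0` spans `ker N`. Thus `Φ` is upper triangular with diagonal entries `q ^ i ζ`.
-/

theorem pow_mul_eq_smul_mul_pow {R A : Type*} [Monoid R] [Monoid A] [MulAction R A]
    [IsScalarTower R A A] [SMulCommClass R A A] {a x : A} {q : R} (h : a * x = q • (x * a))
    (i : ℕ) : a ^ i * x = q ^ i • (x * a ^ i) := by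
  have hsemiconj : SemiconjBy x (q • a) a := by rw [SemiconjBy, mul_smul_comm, h]
  rw [← (hsemiconj.pow_right i).eq, smul_pow, mul_smul_comm]

/-- A Jordan chain of `N` for the eigenvalue `0`, indexed from its bottom vector `e 0 ∈ ker N`
upwards. The vectors may vanish. -/
structure IsJordanChain {R M : Type*} [Semiring R] [AddCommMonoid M] [Module R M] {n : ℕ}
    (N : Module.End R M) (e : Fin (n + 1) → M) : Prop where
  apply_zero : N (e 0) = 0
  apply_succ (i : Fin n) : N (e i.succ) = e i.castSucc

namespace IsJordanChain

section Semiring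

variable {R M : Type*} [Semiring R] [AddCommMonoid M] [Module R M] {n : ℕ} {N : Module.End R M}

theorem of_pow_apply_eq_zero {w : M} (hw : (N ^ (n + 1)) w = 0) :
    IsJordanChain N fun i : Fin (n + 1) ↦ (N ^ (i.rev : ℕ)) w where
  apply_zero := by simpa [pow_succ'] using hw
  apply_succ i := by
    rw [Fin.rev_succ, Fin.rev_castSucc, Fin.val_succ, Fin.val_castSucc, pow_succ',
      Module.End.mul_apply]

theorem castSucc {e : Fin (n + 2) → M} (he : IsJordanChain N e) :
    IsJordanChain N fun i : Fin (n + 1) ↦ e i.castSucc where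
  apply_zero := he.apply_zero
  apply_succ i := he.apply_succ i.castSucc

theorem pow_apply_self {e : Fin (n + 1) → M} (he : IsJordanChain N e) (i : Fin (n + 1)) :
    (N ^ (i : ℕ)) (e i) = e 0 := by
  induction i using Fin.induction with
  | zero => simp
  | succ i ih => rwa [Fin.val_succ, pow_succ, Module.End.mul_apply, he.apply_succ]

theorem pow_apply_eq_zero_of_lt {e : Fin (n + 1) → M} (he : IsJordanChain N e) {i : Fin (n + 1)}
    {l : ℕ} (hil : i < l) : (N ^ l) (e i) = 0 := by
  apply Module.End.pow_map_zero_of_le (Nat.succ_le_of_lt hil)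
  rw [pow_succ', Module.End.mul_apply, he.pow_apply_self, he.apply_zero]

variable {b : Module.Basis (Fin (n + 1)) R M}

theorem repr_apply_castSucc (hb : IsJordanChain N b) (u : M) (i : Fin n) :
    b.repr (N u) i.castSucc = b.repr u i.succ := by
  have hcoord : Finsupp.lapply i.castSucc ∘ₗ b.repr.toLinearMap ∘ₗ N =
      Finsupp.lapply i.succ ∘ₗ b.repr.toLinearMap := by
    refine b.ext fun j ↦ ?_
    cases j using Fin.cases with
    | zero => simp [hb.apply_zero]
    | succ j => simp [hb.apply_succ, Finsupp.single_apply]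
  exact LinearMap.congr_fun hcoord u

theorem repr_pow_apply_zero (hb : IsJordanChain N b) (u : M) (i : Fin (n + 1)) :
    b.repr ((N ^ (i : ℕ)) u) 0 = b.repr u i := by
  induction i using Fin.induction generalizing u with
  | zero => simp
  | succ i ih =>
    rw [Fin.val_succ, pow_succ, Module.End.mul_apply, ← hb.repr_apply_castSucc, ← ih]
    rfl

theorem ker_eq_span (hb : IsJordanChain N b) : LinearMap.ker N = R ∙ b 0 := by
  refine le_antisymm (fun u hu ↦ ?_) ?_
  · have hrepr (i : Fin n) : b.repr u i.succ = 0 := by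
      rw [← hb.repr_apply_castSucc, LinearMap.mem_ker.mp hu, map_zero, Finsupp.zero_apply]
    refine Submodule.mem_span_singleton.mpr ⟨b.repr u 0, ?_⟩
    conv_rhs => rw [← b.sum_repr u, Fin.sum_univ_succ]
    simp only [hrepr, zero_smul, Finset.sum_const_zero, add_zero]
  · rw [Submodule.span_singleton_le_iff_mem]
    exact hb.apply_zero

end Semiring

theorem linearIndependent {R M : Type*} [Ring R] [IsDomain R] [AddCommGroup M] [Module R M]
    [Module.IsTorsionFree R M] {n : ℕ} {N : Module.End R M} {e : Fin (n + 1) → M}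
    (he : IsJordanChain N e) (he0 : e 0 ≠ 0) : LinearIndependent R e := by
  induction n with
  | zero => exact LinearIndependent.of_subsingleton (ι := Fin 1) 0 he0
  | succ n ih =>
    have hinit := Fintype.linearIndependent_iff.mp (ih he.castSucc he0)
    refine Fintype.linearIndependent_iff.mpr fun g hg ↦ ?_
    rw [Fin.sum_univ_succ] at hg
    have hsucc : ∀ i : Fin (n + 1), g i.succ = 0 := by
      refine hinit (fun i ↦ g i.succ) ?_
      simpa only [map_add, map_sum, map_smul, map_zero, he.apply_zero, he.apply_succ, smul_zero,
        zero_add] using congrArg N hg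
    have hzero : g 0 = 0 := by
      simp only [hsucc, zero_smul, Finset.sum_const_zero, add_zero] at hg
      exact (smul_eq_zero.mp hg).resolve_right he0
    exact Fin.cases hzero hsucc

section CommRing

variable {R M : Type*} [CommRing R] [AddCommGroup M] [Module R M] {n : ℕ} {N Φ : Module.End R M}
  {b : Module.Basis (Fin (n + 1)) R M} {q : R}

theorem toMatrix_apply_eq_pow_mul (hb : IsJordanChain N b) (h : N * Φ = q • (Φ * N))
    (i j : Fin (n + 1)) :
    LinearMap.toMatrix b b Φ i j = q ^ (i : ℕ) * b.repr (Φ ((N ^ (i : ℕ)) (b j))) 0 := by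
  have hpow : (N ^ (i : ℕ)) (Φ (b j)) = q ^ (i : ℕ) • Φ ((N ^ (i : ℕ)) (b j)) :=
    LinearMap.congr_fun (pow_mul_eq_smul_mul_pow h i) (b j)
  rw [LinearMap.toMatrix_apply, ← hb.repr_pow_apply_zero, hpow, map_smul, Finsupp.smul_apply,
    smul_eq_mul]

theorem isUpperTriangular_toMatrix (hb : IsJordanChain N b) (h : N * Φ = q • (Φ * N)) :
    (LinearMap.toMatrix b b Φ).IsUpperTriangular := by
  intro i j (hji : j < i)
  simp [hb.toMatrix_apply_eq_pow_mul h, hb.pow_apply_eq_zero_of_lt hji]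

theorem toMatrix_apply_self (hb : IsJordanChain N b) (h : N * Φ = q • (Φ * N)) {ζ : R}
    (hζ : Φ (b 0) = ζ • b 0) (i : Fin (n + 1)) :
    LinearMap.toMatrix b b Φ i i = q ^ (i : ℕ) * ζ := by
  simp [hb.toMatrix_apply_eq_pow_mul h, hb.pow_apply_self, hζ]

theorem charpoly_eq_prod [Module.Free R M] [Module.Finite R M] (hb : IsJordanChain N b)
    (h : N * Φ = q • (Φ * N)) {ζ : R} (hζ : Φ (b 0) = ζ • b 0) :
    Φ.charpoly = ∏ j ∈ Finset.range (n + 1), (Polynomial.X - Polynomial.C (q ^ j * ζ)) := by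
  rw [← LinearMap.charpoly_toMatrix Φ b,
    Matrix.charpoly_of_isUpperTriangular _ (hb.isUpperTriangular_toMatrix h), Finset.prod_range]
  simp only [hb.toMatrix_apply_self h hζ]

end CommRing

end IsJordanChain

theorem pow_finrank_eq_zero_of_isNilpotent {R M : Type*} [CommRing R] [IsDomain R]
    [AddCommGroup M] [Module R M] [Module.Free R M] [Module.Finite R M] {N : Module.End R M}
    (hN : IsNilpotent N) : N ^ Module.finrank R M = 0 := by
  simpa [hN.charpoly_eq_X_pow_finrank] using N.aeval_self_charpoly

section Field

variable {k V : Type*} [Field k] [AddCommGroup V] [Module k V] [FiniteDimensional k V]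

theorem exists_basis_isJordanChain {n : ℕ} (hdim : Module.finrank k V = n + 1)
    {N : Module.End k V} (hnil : IsNilpotent N) (hmax : N ^ n ≠ 0) :
    ∃ b : Module.Basis (Fin (n + 1)) k V, IsJordanChain N b := by
  obtain ⟨w, hw⟩ : ∃ w, (N ^ n) w ≠ 0 := DFunLike.ne_iff.mp hmax
  have hchain : IsJordanChain N fun i : Fin (n + 1) ↦ (N ^ (i.rev : ℕ)) w := by
    apply IsJordanChain.of_pow_apply_eq_zero
    rw [← hdim, pow_finrank_eq_zero_of_isNilpotent hnil, LinearMap.zero_apply]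
  have hli := hchain.linearIndependent (by simpa using hw)
  refine ⟨basisOfLinearIndependentOfCardEqFinrank hli (by simp [hdim]), ?_⟩
  rwa [coe_basisOfLinearIndependentOfCardEqFinrank]

theorem stmt_10_general {r : ℕ} (hdim : Module.finrank k V = r)
    (N Φ : V →ₗ[k] V) (hnil : IsNilpotent N) (hmax : N ^ (r - 1) ≠ 0)
    (q : k) (h : N ∘ₗ Φ = q • (Φ ∘ₗ N))
    (v : V) (hv0 : v ≠ 0) (hvker : v ∈ LinearMap.ker N) (ζ : k) (hζ : Φ v = ζ • v) :
    LinearMap.charpoly Φ = ∏ j ∈ Finset.range r, (Polynomial.X - Polynomial.C (q ^ j * ζ)) := by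
  have : Nontrivial V := ⟨v, 0, hv0⟩
  obtain ⟨n, rfl⟩ := Nat.exists_eq_add_one.mpr (hdim ▸ Module.finrank_pos (R := k) (M := V))
  obtain ⟨b, hb⟩ := exists_basis_isJordanChain hdim hnil hmax
  obtain ⟨c, rfl⟩ := Submodule.mem_span_singleton.mp (hb.ker_eq_span ▸ hvker)
  have hζb : Φ (b 0) = ζ • b 0 := by
    rw [map_smul, smul_comm] at hζ
    exact smul_right_injective V (left_ne_zero_of_smul hv0) hζ
  exact hb.charpoly_eq_prod h hζb

end Field

/-- If `N` is a maximal Jordan block nilpotent on an `r`-dimensional space, `Φ` is invertible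
with `N ∘ Φ = q • (Φ ∘ N)`, and `Φ` acts on the line `ker N` by the scalar `ζ`, then the
characteristic polynomial of `Φ` is `∏ j = 0, ..., r-1, (X - q^j ζ)`. -/
theorem stmt_10 {k V : Type*} [Field k] [AddCommGroup V] [Module k V]
    [FiniteDimensional k V] {r : ℕ} (hdim : Module.finrank k V = r)
    (N Φ : V →ₗ[k] V) (hnil : IsNilpotent N) (hmax : N ^ (r - 1) ≠ 0)
    (hΦ : Function.Bijective Φ) (q : k) (h : N ∘ₗ Φ = q • (Φ ∘ₗ N))
    (v : V) (hv0 : v ≠ 0) (hvker : v ∈ LinearMap.ker N) (ζ : k) (hζ : Φ v = ζ • v) :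
    LinearMap.charpoly Φ = ∏ j ∈ Finset.range r, (Polynomial.X - Polynomial.C (q ^ j * ζ)) :=
  stmt_10_general hdim N Φ hnil hmax q h v hv0 hvker ζ hζ
end
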